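/- arXiv:math/0505227 — 4 statements merged into one kernel-verified Lean document; each statement's English description precedes it below -/
import Mathlib

section
/- Let E be a finite-dimensional real inner product space and d : E → E a linear map with d ∘ d = 0; let d* denote the adjoint of d, characterized by ⟨d* x, y⟩ = ⟨x, d y⟩ for all x, y ∈ E. Define the harmonic subspace H = ker d ∩ ker d*. Then E is the internal orthogonal direct sum of the three pairwise-orthogonal subspaces range d, H, and range d*. -/
open scoped RealInnerProductSpace

/-!
With `U = range d` and `V = range d*`, the harmonic subspace is `Vᗮ ⊓ Uᗮ`, because the kernel of a
map is the orthogonal complement of the range of its adjoint. The identity `d ∘ d = 0` says that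
`U ⟂ V`, and splitting off first `U` and then `V ≤ Uᗮ` decomposes the whole space.
-/

section HodgeDecomposition

open scoped InnerProductSpace
open LinearMap (range ker)

variable {𝕜 E F G : Type*} [RCLike 𝕜]
  [NormedAddCommGroup E] [InnerProductSpace 𝕜 E]
  [NormedAddCommGroup F] [InnerProductSpace 𝕜 F]
  [NormedAddCommGroup G] [InnerProductSpace 𝕜 G]

theorem sup_inf_orthogonal_sup_eq_top_of_isOrtho {U V : Submodule 𝕜 E}
    [U.HasOrthogonalProjection] [V.HasOrthogonalProjection] (hUV : U ⟂ V) :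
    U ⊔ (Vᗮ ⊓ Uᗮ) ⊔ V = ⊤ :=
  calc
    U ⊔ (Vᗮ ⊓ Uᗮ) ⊔ V = U ⊔ (V ⊔ Vᗮ ⊓ Uᗮ) := by rw [sup_assoc, sup_comm V]
    _ = U ⊔ Uᗮ := by rw [Submodule.sup_orthogonal_inf_of_hasOrthogonalProjection hUV.symm.le]
    _ = ⊤ := Submodule.sup_orthogonal_of_hasOrthogonalProjection

theorem orthogonal_range_eq_ker_formalAdjoint {f : E →ₗ[𝕜] F} {fstar : F →ₗ[𝕜] E}
    (hadj : ∀ y x, ⟪fstar y, x⟫_𝕜 = ⟪y, f x⟫_𝕜) : (range f)ᗮ = ker fstar := by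
  ext y
  calc
    y ∈ (range f)ᗮ ↔ ∀ x, ⟪y, f x⟫_𝕜 = 0 := by
      simp only [Submodule.mem_orthogonal', LinearMap.mem_range, forall_exists_index,
        forall_apply_eq_imp_iff]
    _ ↔ ∀ x, ⟪fstar y, x⟫_𝕜 = 0 := by simp only [hadj]
    _ ↔ y ∈ ker fstar :=
      ⟨fun h => inner_self_eq_zero.mp (h (fstar y)),
        fun h x => by rw [LinearMap.mem_ker.mp h, inner_zero_left]⟩

theorem formalAdjoint_symm {f : E →ₗ[𝕜] F} {fstar : F →ₗ[𝕜] E}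
    (hadj : ∀ y x, ⟪fstar y, x⟫_𝕜 = ⟪y, f x⟫_𝕜) (x : E) (y : F) :
    ⟪f x, y⟫_𝕜 = ⟪x, fstar y⟫_𝕜 := by
  rw [← inner_conj_symm, ← hadj, inner_conj_symm]

theorem stmt0_general {f : G →ₗ[𝕜] E} {fstar : E →ₗ[𝕜] G} {g : E →ₗ[𝕜] F} {gstar : F →ₗ[𝕜] E}
    [(range f).HasOrthogonalProjection] [(range gstar).HasOrthogonalProjection]
    (hgf : g ∘ₗ f = 0) (hf : ∀ x z, ⟪fstar x, z⟫_𝕜 = ⟪x, f z⟫_𝕜)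
    (hg : ∀ y x, ⟪gstar y, x⟫_𝕜 = ⟪y, g x⟫_𝕜) :
    range f ⟂ ker g ⊓ ker fstar ∧ range f ⟂ range gstar ∧ ker g ⊓ ker fstar ⟂ range gstar ∧
      range f ⊔ (ker g ⊓ ker fstar) ⊔ range gstar = ⊤ := by
  have hkerf : (range f)ᗮ = ker fstar := orthogonal_range_eq_ker_formalAdjoint hf
  have hkerg : (range gstar)ᗮ = ker g :=
    orthogonal_range_eq_ker_formalAdjoint (formalAdjoint_symm hg)
  have hortho : range f ⟂ range gstar := by
    rw [Submodule.isOrtho_iff_le, hkerg]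
    exact LinearMap.range_le_ker_iff.mpr hgf
  rw [← hkerf, ← hkerg]
  exact ⟨(Submodule.isOrtho_orthogonal_right _).mono_right inf_le_right, hortho,
    (Submodule.isOrtho_orthogonal_left _).mono_left inf_le_left,
    sup_inf_orthogonal_sup_eq_top_of_isOrtho hortho⟩

end HodgeDecomposition

/-- Combinatorial Hodge decomposition (Eckmann): for a finite-dimensional real inner
product space `E` with `d : E →ₗ E`, `d ∘ d = 0`, and adjoint `dstar`, the space `E`
is the internal orthogonal direct sum of `range d`, the harmonic subspace
`ker d ⊓ ker dstar`, and `range dstar`. -/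
theorem stmt0 (E : Type*) [NormedAddCommGroup E] [InnerProductSpace ℝ E]
    [FiniteDimensional ℝ E] (d dstar : E →ₗ[ℝ] E)
    (hd : d ∘ₗ d = 0)
    (hadj : ∀ x y : E, ⟪dstar x, y⟫ = ⟪x, d y⟫) :
    (∀ x ∈ LinearMap.range d,
      ∀ y ∈ (LinearMap.ker d ⊓ LinearMap.ker dstar : Submodule ℝ E), ⟪x, y⟫ = 0) ∧
    (∀ x ∈ LinearMap.range d, ∀ y ∈ LinearMap.range dstar, ⟪x, y⟫ = 0) ∧
    (∀ x ∈ (LinearMap.ker d ⊓ LinearMap.ker dstar : Submodule ℝ E),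
      ∀ y ∈ LinearMap.range dstar, ⟪x, y⟫ = 0) ∧
    LinearMap.range d ⊔ (LinearMap.ker d ⊓ LinearMap.ker dstar) ⊔ LinearMap.range dstar = ⊤ := by
  simpa only [Submodule.isOrtho_iff_inner_eq] using stmt0_general hd hadj hadj
end

section
/- Assume the pairings satisfy the identity P_{j+1}(δσ, τ) = (−1)^{j+1} P_j(σ, δτ) for all σ ∈ C^j and τ ∈ C^{n−j−1} (this identity follows from δ being a derivation of the cup product on a closed manifold). Then the combinatorial star operator is a chain map up to sign: for all σ ∈ C^j, ★(δσ) = (−1)^{j+1} δ*(★σ). -/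
open scoped RealInnerProductSpace

/-- The combinatorial star operator of a pairing `P` on `V × W`: the map `s : V → W` that represents
`P` through the inner product of `W`. It is a predicate on `s` rather than a chosen map, since for
infinite-dimensional `W` a representing map need not exist. -/
def IsCombinatorialStar {V W : Type*} [AddCommGroup V] [Module ℝ V]
    [SeminormedAddCommGroup W] [InnerProductSpace ℝ W]
    (P : V →ₗ[ℝ] W →ₗ[ℝ] ℝ) (s : V →ₗ[ℝ] W) : Prop :=
  ∀ (σ : V) (τ : W), ⟪s σ, τ⟫ = P σ τ

namespace IsCombinatorialStar

variable {V V' : Type*} [AddCommGroup V] [Module ℝ V] [AddCommGroup V'] [Module ℝ V']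

theorem unique {W : Type*} [NormedAddCommGroup W] [InnerProductSpace ℝ W]
    {P : V →ₗ[ℝ] W →ₗ[ℝ] ℝ} {s t : V →ₗ[ℝ] W}
    (hs : IsCombinatorialStar P s) (ht : IsCombinatorialStar P t) : s = t :=
  LinearMap.ext fun σ => ext_inner_right ℝ fun τ => (hs σ τ).trans (ht σ τ).symm

variable {W W' : Type*} [SeminormedAddCommGroup W] [InnerProductSpace ℝ W]
  [SeminormedAddCommGroup W'] [InnerProductSpace ℝ W']
  {P : V →ₗ[ℝ] W →ₗ[ℝ] ℝ} {s : V →ₗ[ℝ] W}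

theorem const_smul (hs : IsCombinatorialStar P s) (c : ℝ) : IsCombinatorialStar (c • P) (c • s) :=
  fun σ τ => (real_inner_smul_left (s σ) τ c).trans (congrArg (c * ·) (hs σ τ))

theorem comp (hs : IsCombinatorialStar P s) (f : V' →ₗ[ℝ] V) :
    IsCombinatorialStar (P ∘ₗ f) (s ∘ₗ f) :=
  fun σ τ => hs (f σ) τ

theorem adjoint_comp (hs : IsCombinatorialStar P s) {g : W' →ₗ[ℝ] W} {gstar : W →ₗ[ℝ] W'}
    (hadj : ∀ (x : W) (y : W'), ⟪gstar x, y⟫ = ⟪x, g y⟫) :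
    IsCombinatorialStar (P.compl₂ g) (gstar ∘ₗ s) :=
  fun σ τ => (hadj (s σ) τ).trans (hs σ (g τ))

end IsCombinatorialStar

theorem stmt2_general {V V' W W' : Type*} [AddCommGroup V] [Module ℝ V]
    [AddCommGroup V'] [Module ℝ V'] [SeminormedAddCommGroup W] [InnerProductSpace ℝ W]
    [NormedAddCommGroup W'] [InnerProductSpace ℝ W']
    {δ : V →ₗ[ℝ] V'} {δ' : W' →ₗ[ℝ] W} {δ'star : W →ₗ[ℝ] W'}
    {P : V →ₗ[ℝ] W →ₗ[ℝ] ℝ} {Q : V' →ₗ[ℝ] W' →ₗ[ℝ] ℝ}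
    {star1 : V →ₗ[ℝ] W} {star2 : V' →ₗ[ℝ] W'} {c : ℝ}
    (hadj : ∀ (x : W) (y : W'), ⟪δ'star x, y⟫ = ⟪x, δ' y⟫)
    (hstar1 : IsCombinatorialStar P star1) (hstar2 : IsCombinatorialStar Q star2)
    (hderiv : ∀ (σ : V) (τ : W'), Q (δ σ) τ = c * P σ (δ' τ)) :
    star2 ∘ₗ δ = c • (δ'star ∘ₗ star1) := by
  have pairing_eq : Q ∘ₗ δ = c • P.compl₂ δ' := LinearMap.ext₂ hderiv
  have star_left : IsCombinatorialStar (c • P.compl₂ δ') (star2 ∘ₗ δ) :=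
    pairing_eq ▸ hstar2.comp δ
  have star_right : IsCombinatorialStar (c • P.compl₂ δ') (c • (δ'star ∘ₗ star1)) :=
    (hstar1.adjoint_comp hadj).const_smul c
  exact star_left.unique star_right

/-- The combinatorial star operator is a chain map up to sign:
`★(δσ) = (−1)^{j+1} δ*(★σ)`.  Here `Cj, Cj1, Cnj1, Cnj` model the cochain groups
`C^j, C^{j+1}, C^{n−j−1}, C^{n−j}` of a triangulated closed oriented `n`-manifold,
`P` and `Q` model the Poincaré duality pairings `(σ, τ) ↦ (σ ∪ τ)[M]` in degrees
`j` and `j+1`, `δ` is the coboundary, `δ'` is the coboundary `C^{n−j−1} → C^{n−j}`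
with adjoint `δ'star`, and `star1`, `star2` are the star operators in degrees
`j` and `j+1`, characterized by `⟪★σ, τ⟫ = P σ τ`. -/
theorem stmt2 (n j : ℕ) (hjn : j + 1 ≤ n)
    (Cj Cj1 Cnj1 Cnj : Type*)
    [NormedAddCommGroup Cj] [InnerProductSpace ℝ Cj] [FiniteDimensional ℝ Cj]
    [NormedAddCommGroup Cj1] [InnerProductSpace ℝ Cj1] [FiniteDimensional ℝ Cj1]
    [NormedAddCommGroup Cnj1] [InnerProductSpace ℝ Cnj1] [FiniteDimensional ℝ Cnj1]
    [NormedAddCommGroup Cnj] [InnerProductSpace ℝ Cnj] [FiniteDimensional ℝ Cnj]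
    (δ : Cj →ₗ[ℝ] Cj1) (δ' : Cnj1 →ₗ[ℝ] Cnj) (δ'star : Cnj →ₗ[ℝ] Cnj1)
    (P : Cj →ₗ[ℝ] Cnj →ₗ[ℝ] ℝ) (Q : Cj1 →ₗ[ℝ] Cnj1 →ₗ[ℝ] ℝ)
    (star1 : Cj →ₗ[ℝ] Cnj) (star2 : Cj1 →ₗ[ℝ] Cnj1)
    (hadj : ∀ (x : Cnj) (y : Cnj1), ⟪δ'star x, y⟫ = ⟪x, δ' y⟫)
    (hstar1 : ∀ (σ : Cj) (τ : Cnj), ⟪star1 σ, τ⟫ = P σ τ)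
    (hstar2 : ∀ (σ : Cj1) (τ : Cnj1), ⟪star2 σ, τ⟫ = Q σ τ)
    (hderiv : ∀ (σ : Cj) (τ : Cnj1), Q (δ σ) τ = (-1 : ℝ) ^ (j + 1) * P σ (δ' τ)) :
    ∀ σ : Cj, star2 (δ σ) = ((-1 : ℝ) ^ (j + 1)) • δ'star (star1 σ) :=
  LinearMap.congr_fun (stmt2_general hadj hstar1 hstar2 hderiv)
end

section
/- Let g ≥ 1 and let V ⊆ ℂ^g × ℂ^g be a complex subspace of dimension g. Assume the bilinear relations: for all (A, B), (A', B') ∈ V, Σ_{i=1}^g (A_i B'_i − B_i A'_i) = 0; and the positivity condition: for all nonzero (A, B) ∈ V, the complex number i · Σ_{i=1}^g (A_i conj(B_i) − B_i conj(A_i)) is a positive real number. Then: (a) the projection π : V → ℂ^g, (A, B) ↦ A, is a linear isomorphism; (b) letting σ_j = π^{-1}(e_j) for the standard basis vectors e_j of ℂ^g, and defining the g × g period matrix Π by Π_{jk} = (B-component of σ_j)_k, the matrix Π is symmetric (Π_{jk} = Π_{kj}) and its imaginary part Im Π is positive definite as a real symmetric matrix. -/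
/-!
For a period vector `p = (A, B)`, the number `i (A ⬝ conj B - B ⬝ conj A)` is always real, equal
to `2 Im (B ⬝ conj A)`; it vanishes when `A = 0`, so positivity makes `(A, B) ↦ A` injective on `V`,
and a dimension count makes it bijective. The pairing of two normalized vectors `σ_j`, `σ_k` is
`Π_{kj} - Π_{jk}`, so the bilinear relations say that `Π` is symmetric. Finally, for real `c` the
vector `∑ c_j σ_j` is `(c, c Π)`, whose positive norm is twice the quadratic form of `Im Π` at `c`.
-/

open Matrix

theorem bijective_fst_comp_subtype_of_finrank_eq {K M N : Type*} [DivisionRing K]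
    [AddCommGroup M] [Module K M] [FiniteDimensional K M] [AddCommGroup N] [Module K N]
    {V : Submodule K (M × N)} (hV : ∀ p ∈ V, p.1 = 0 → p = 0)
    (hdim : Module.finrank K V = Module.finrank K M) :
    Function.Bijective ((LinearMap.fst K M N).comp V.subtype) := by
  have hinj : Function.Injective ((LinearMap.fst K M N).comp V.subtype) :=
    (injective_iff_map_eq_zero _).2 fun p hp => Subtype.ext (hV p p.2 hp)
  have : FiniteDimensional K V := Module.Finite.of_injective _ hinj
  exact ⟨hinj, (LinearMap.injective_iff_surjective_of_finrank_eq_finrank hdim).1 hinj⟩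

section PeriodPairing

variable {ι R : Type*} [Fintype ι]

/-- The standard symplectic pairing on `R^ι × R^ι`, whose vanishing on a space of period vectors
`(A, B)` expresses Riemann's bilinear relations. -/
def periodPairing [NonUnitalNonAssocRing R] (p q : (ι → R) × (ι → R)) : R :=
  p.1 ⬝ᵥ q.2 - p.2 ⬝ᵥ q.1

theorem periodPairing_eq_sum [NonUnitalNonAssocRing R] (p q : (ι → R) × (ι → R)) :
    periodPairing p q = ∑ i, (p.1 i * q.2 i - p.2 i * q.1 i) :=
  (Finset.sum_sub_distrib _ _).symm

theorem I_mul_periodPairing_star (p : (ι → ℂ) × (ι → ℂ)) :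
    Complex.I * periodPairing p (star p) = ((2 * (p.2 ⬝ᵥ star p.1).im : ℝ) : ℂ) := by
  have hsub : periodPairing p (star p) = -(((2 * (p.2 ⬝ᵥ star p.1).im : ℝ) : ℂ) * Complex.I) := by
    rw [← Complex.sub_conj, neg_sub, starRingEnd_apply, ← dotProduct_star]
    rfl
  rw [hsub, mul_neg, mul_left_comm, Complex.I_mul_I, mul_neg_one, neg_neg]

theorem im_dotProduct_star_pos {p : (ι → ℂ) × (ι → ℂ)} {r : ℝ} (hr : 0 < r)
    (hp : Complex.I * periodPairing p (star p) = r) : 0 < (p.2 ⬝ᵥ star p.1).im := by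
  rw [I_mul_periodPairing_star, Complex.ofReal_inj] at hp
  linarith

end PeriodPairing

section PeriodMatrix

variable {ι R : Type*}

/-- The matrix whose `j`-th row consists of the B-periods of `σ j`. It is the period matrix when the
family `σ` is normalized, i.e. when the A-periods of `σ j` are `Pi.single j 1`. -/
def periodMatrix (σ : ι → (ι → R) × (ι → R)) : Matrix ι ι R :=
  of fun j k => (σ j).2 k

variable [Fintype ι] [DecidableEq ι] {σ : ι → (ι → R) × (ι → R)}

theorem periodPairing_of_normalized [NonAssocRing R] (hσ : ∀ j, (σ j).1 = Pi.single j 1)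
    (j k : ι) : periodPairing (σ j) (σ k) = periodMatrix σ k j - periodMatrix σ j k := by
  simp [periodPairing, periodMatrix, hσ]

theorem isSymm_periodMatrix [NonAssocRing R] (hσ : ∀ j, (σ j).1 = Pi.single j 1)
    (hbil : ∀ j k, periodPairing (σ j) (σ k) = 0) : (periodMatrix σ).IsSymm :=
  IsSymm.ext fun j k => sub_eq_zero.1 <| periodPairing_of_normalized hσ j k ▸ hbil j k

theorem sum_smul_of_normalized [Semiring R] (hσ : ∀ j, (σ j).1 = Pi.single j 1) (c : ι → R) :
    ∑ j, c j • σ j = (c, c ᵥ* periodMatrix σ) := by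
  ext k
  · simp [Prod.fst_sum, hσ, Pi.single_apply]
  · simp [Prod.snd_sum, vecMul, dotProduct, periodMatrix]

end PeriodMatrix

theorem im_vecMul_dotProduct_ofReal {m n : Type*} [Fintype m] [Fintype n] (M : Matrix m n ℂ)
    (c : m → ℝ) (d : n → ℝ) :
    ((fun i => (c i : ℂ)) ᵥ* M ⬝ᵥ fun k => (d k : ℂ)).im = c ᵥ* M.map Complex.im ⬝ᵥ d := by
  simp [vecMul, dotProduct]

theorem posDef_im_periodMatrix {ι : Type*} [Fintype ι] [DecidableEq ι]
    {V : Submodule ℂ ((ι → ℂ) × (ι → ℂ))} {σ : ι → (ι → ℂ) × (ι → ℂ)}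
    (hσV : ∀ j, σ j ∈ V) (hσ : ∀ j, (σ j).1 = Pi.single j 1)
    (hsymm : (periodMatrix σ).IsSymm)
    (hpos : ∀ p ∈ V, p ≠ 0 → 0 < (p.2 ⬝ᵥ star p.1).im) :
    ((periodMatrix σ).map Complex.im).PosDef := by
  refine PosDef.of_dotProduct_mulVec_pos
    (isHermitian_iff_isSymm.2 (hsymm.map Complex.im)) fun c hc => ?_
  set a : ι → ℂ := fun i => c i
  have hmem : (a, a ᵥ* periodMatrix σ) ∈ V :=
    sum_smul_of_normalized hσ a ▸ V.sum_mem fun j _ => V.smul_mem _ (hσV j)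
  have hne : (a, a ᵥ* periodMatrix σ) ≠ 0 := fun h =>
    hc <| funext fun i => Complex.ofReal_eq_zero.1 (congrFun (congrArg Prod.fst h) i)
  have hstar : star a = a := funext fun i => Complex.conj_ofReal (c i)
  calc 0 < (a ᵥ* periodMatrix σ ⬝ᵥ star a).im := hpos _ hmem hne
    _ = c ᵥ* (periodMatrix σ).map Complex.im ⬝ᵥ c := by
      rw [hstar, im_vecMul_dotProduct_ofReal]
    _ = star c ⬝ᵥ (periodMatrix σ).map Complex.im *ᵥ c := by
      rw [star_trivial, dotProduct_mulVec]

/-- Combinatorial period matrix of a genus-`g` surface.  `V ⊆ ℂ^g × ℂ^g` is the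
`g`-dimensional space of (A-periods, B-periods) of holomorphic 1-cochains, satisfying
Riemann's bilinear relations and the positivity condition.  Then (a) projection onto
the A-periods is an isomorphism `V ≅ ℂ^g`, and (b) for the basis `σ_j` of `V` whose
A-periods are the standard basis vectors, the period matrix `Π_{jk} = (σ_j)_B(k)`
is symmetric with positive definite imaginary part. -/
theorem stmt6 (g : ℕ) (hg : 1 ≤ g) (V : Submodule ℂ ((Fin g → ℂ) × (Fin g → ℂ)))
    (hdim : Module.finrank ℂ V = g)
    (hbil : ∀ p ∈ V, ∀ q ∈ V,
      ∑ i : Fin g, (p.1 i * q.2 i - p.2 i * q.1 i) = 0)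
    (hpos : ∀ p ∈ V, p ≠ 0 → ∃ r : ℝ, 0 < r ∧
      Complex.I * ∑ i : Fin g,
        (p.1 i * (starRingEnd ℂ) (p.2 i) - p.2 i * (starRingEnd ℂ) (p.1 i)) = (r : ℂ)) :
    Function.Bijective ((LinearMap.fst ℂ (Fin g → ℂ) (Fin g → ℂ)).comp V.subtype) ∧
    ∀ σ : Fin g → V,
      (∀ j k : Fin g, (σ j : (Fin g → ℂ) × (Fin g → ℂ)).1 k = if j = k then 1 else 0) →
      ((∀ j k : Fin g,
          (σ j : (Fin g → ℂ) × (Fin g → ℂ)).2 k = (σ k : (Fin g → ℂ) × (Fin g → ℂ)).2 j) ∧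
       ∀ c : Fin g → ℝ, c ≠ 0 →
         0 < ∑ j : Fin g, ∑ k : Fin g,
               c j * c k * ((σ j : (Fin g → ℂ) × (Fin g → ℂ)).2 k).im) := by
  have hnorm : ∀ p ∈ V, p ≠ 0 → 0 < (p.2 ⬝ᵥ star p.1).im := fun p hp hp0 => by
    obtain ⟨r, hr, hrp⟩ := hpos p hp hp0
    exact im_dotProduct_star_pos hr (by rw [periodPairing_eq_sum]; exact hrp)
  refine ⟨bijective_fst_comp_subtype_of_finrank_eq (fun p hp hA => ?_) (by simp [hdim]),
    fun σ hσ => ?_⟩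
  · by_contra hp0
    simpa [hA] using hnorm p hp hp0
  · have hsingle : ∀ j, (σ j).1.1 = Pi.single j 1 := fun j => by
      ext k
      simp [hσ, Pi.single_apply, eq_comm]
    have hsymm : (periodMatrix fun j => (σ j).1).IsSymm := isSymm_periodMatrix hsingle fun j k =>
      (periodPairing_eq_sum _ _).trans (hbil _ (σ j).2 _ (σ k).2)
    refine ⟨fun j k => hsymm.apply k j, fun c hc => ?_⟩
    have hdef := posDef_im_periodMatrix (fun j => (σ j).2) hsingle hsymm hnorm
    rw [Finset.sum_comm]
    simpa [dot_mulVec_eq_sum_sum, periodMatrix, mul_right_comm] using hdef.dotProduct_mulVec_pos hc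
end

section
/- Let R be a commutative ring, A a commutative R-algebra, M an A-module, and d : A → M an R-linear derivation. Let n ≥ 1 and let μ_0, μ_1, …, μ_n ∈ A satisfy Σ_{i=0}^n μ_i = 1. For a subset I = {i_1 < i_2 < ⋯ < i_m} of {1, …, n} and an index r ∈ {0, 1, …, n} \ I, define the element W(r, I) of the m-th exterior power Λ^m_A M by W(r, I) = m! · [ μ_r · dμ_{i_1} ∧ ⋯ ∧ dμ_{i_m} + Σ_{s=1}^m (−1)^s μ_{i_s} · dμ_r ∧ dμ_{i_1} ∧ ⋯ ∧ (omit dμ_{i_s}) ∧ ⋯ ∧ dμ_{i_m} ]. Then W(0, I) = m! · dμ_{i_1} ∧ ⋯ ∧ dμ_{i_m} − Σ_{r ∈ {1,…,n} \ I} W(r, I). -/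
/-- The algebraic Whitney form `W(r, I)`, an element of the exterior algebra of `M`
over `A`: for barycentric coordinates `μ_0, …, μ_n` and `I = {f 0 < f 1 < ⋯}` a set
of `m` indices, `W(r, I) = m! [ μ_r dμ_{i_1} ∧ ⋯ ∧ dμ_{i_m}
+ Σ_{s=1}^m (−1)^s μ_{i_s} dμ_r ∧ dμ_{i_1} ∧ ⋯ (omit s) ⋯ ∧ dμ_{i_m} ]`. -/
noncomputable def whitneyForm {R A M : Type*} [CommRing R] [CommRing A] [Algebra R A]
    [AddCommGroup M] [Module R M] [Module A M] [IsScalarTower R A M]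
    (d : Derivation R A M) {n m : ℕ} (μ : Fin (n + 1) → A)
    (f : Fin m → Fin (n + 1)) (r : Fin (n + 1)) : ExteriorAlgebra A M :=
  (Nat.factorial m) •
    (μ r • (List.ofFn fun s : Fin m => ExteriorAlgebra.ι A (d (μ (f s)))).prod +
     ∑ s : Fin m, ((-1 : ℤ) ^ ((s : ℕ) + 1)) •
       (μ (f s) • (ExteriorAlgebra.ι A (d (μ r)) *
         ((List.ofFn fun t : Fin m => ExteriorAlgebra.ι A (d (μ (f t)))).eraseIdx
           (s : ℕ)).prod)))

/-!
Pair each `a ∈ A` with its differential: `j a = (a, d a) ∈ A × M`. The bracket in `W(r, I)` is then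
`Φ (j μ_r, j μ_{i_1}, …, j μ_{i_m})`, where `Φ` is the alternating `A`-multilinear map
`Φ (v_0, …, v_m) = Σ_k (−1)^k a_k • x_0 ∧ ⋯ (omit k) ⋯ ∧ x_m` in the vectors `v_k = (a_k, x_k)`.
Since `Φ` alternates, `W(r, I) = 0` for `r ∈ I`. Since `Φ` is additive in its first argument and
`Σ_r j μ_r = j 1 = (1, 0)`, summing over all `r` leaves `m! • dμ_{i_1} ∧ ⋯ ∧ dμ_{i_m}`.
-/

theorem eraseIdx_ofFn {α : Type*} {n : ℕ} (v : Fin (n + 1) → α) (k : Fin (n + 1)) :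
    (List.ofFn v).eraseIdx k = List.ofFn (k.removeNth v) := by
  have length_eq : ((List.ofFn v).eraseIdx k).length = (List.ofFn (k.removeNth v)).length := by
    simp [List.length_eraseIdx, Fin.is_le, -List.ofFn_succ]
  refine List.ext_getElem length_eq fun i _ _ ↦ ?_
  simp only [List.getElem_eraseIdx, List.getElem_ofFn, Fin.removeNth_apply, Fin.succAbove,
    Fin.lt_def, Fin.val_castSucc]
  split_ifs <;> rfl

theorem alternatingMap_vecCons_sum {R M N ι : Type*} [Semiring R] [AddCommMonoid M]
    [AddCommMonoid N] [Module R M] [Module R N] {n : ℕ} (Φ : M [⋀^Fin (n + 1)]→ₗ[R] N)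
    (t : Finset ι) (g : ι → M) (v : Fin n → M) :
    Φ (Matrix.vecCons (∑ i ∈ t, g i) v) = ∑ i ∈ t, Φ (Matrix.vecCons (g i) v) := by
  simpa only [Matrix.vecCons, Fin.update_cons_zero] using Φ.map_update_sum t 0 g (Fin.cons 0 v)

section WhitneyMap

variable (A M : Type*) [CommRing A] [AddCommGroup M] [Module A M] (m : ℕ)

/-- The alternating map `((a_0, x_0), …, (a_m, x_m)) ↦ Σ_k (−1)^k a_k • x_0 ∧ ⋯ (omit k) ⋯ ∧ x_m`,
which extends the bracket in the Whitney form from the pairs `(μ_i, dμ_i)` to all of `A × M`. -/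
noncomputable def whitneyMap : (A × M) [⋀^Fin (m + 1)]→ₗ[A] ExteriorAlgebra A M :=
  AlternatingMap.alternatizeUncurryFin <|
    (LinearMap.fst A A M).smulRight
      ((ExteriorAlgebra.ιMulti A m).compLinearMap (LinearMap.snd A A M))

variable {A M m}

theorem whitneyMap_apply (v : Fin (m + 1) → A × M) :
    whitneyMap A M m v = ∑ k : Fin (m + 1), (-1 : ℤ) ^ (k : ℕ) •
      (v k).1 • ExteriorAlgebra.ιMulti A m (k.removeNth fun i ↦ (v i).2) := by
  rw [whitneyMap, AlternatingMap.alternatizeUncurryFin_apply]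
  rfl

theorem whitneyMap_vecCons (a : A) (x : M) (v : Fin m → A × M) :
    whitneyMap A M m (Matrix.vecCons (a, x) v) =
      a • (List.ofFn fun s ↦ ExteriorAlgebra.ι A (v s).2).prod +
        ∑ s : Fin m, (-1 : ℤ) ^ ((s : ℕ) + 1) • (v s).1 • (ExteriorAlgebra.ι A x *
          ((List.ofFn fun t ↦ ExteriorAlgebra.ι A (v t).2).eraseIdx s).prod) := by
  have ιMulti_removeNth_succ (s : Fin m) :
      ExteriorAlgebra.ιMulti A m (s.succ.removeNth fun i ↦ (Matrix.vecCons (a, x) v i).2) =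
        ExteriorAlgebra.ι A x *
          ((List.ofFn fun t ↦ ExteriorAlgebra.ι A (v t).2).eraseIdx s).prod := by
    have erase := eraseIdx_ofFn (fun i ↦ ExteriorAlgebra.ι A (Matrix.vecCons (a, x) v i).2) s.succ
    rw [List.ofFn_succ, Fin.val_succ, List.eraseIdx_cons_succ] at erase
    rw [ExteriorAlgebra.ιMulti_apply, ← List.prod_cons]
    exact congrArg List.prod erase.symm
  rw [whitneyMap_apply, Fin.sum_univ_succ]
  simp only [ιMulti_removeNth_succ, Matrix.cons_val_zero, Matrix.cons_val_succ, Fin.val_zero,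
    Fin.val_succ, pow_zero, one_smul, Fin.removeNth_zero, ExteriorAlgebra.ιMulti_apply]
  rfl

end WhitneyMap

section WhitneyForm

variable {R A M : Type*} [CommRing R] [CommRing A] [Algebra R A] [AddCommGroup M] [Module R M]
  [Module A M]

/-- The graph map `a ↦ (a, d a)` of a derivation, only `R`-linear. It turns a family in `A`
into the vectors on which `whitneyMap` is evaluated. -/
def derivationGraph (d : Derivation R A M) : A →ₗ[R] A × M :=
  LinearMap.id.prod d

theorem derivationGraph_one (d : Derivation R A M) : derivationGraph d 1 = (1, 0) :=
  Prod.ext rfl d.map_one_eq_zero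

variable [IsScalarTower R A M] (d : Derivation R A M) {n m : ℕ} (μ : Fin (n + 1) → A)
  (f : Fin m → Fin (n + 1))

theorem whitneyForm_eq_whitneyMap (r : Fin (n + 1)) :
    whitneyForm d μ f r = m.factorial • whitneyMap A M m
      (Matrix.vecCons (derivationGraph d (μ r)) fun s ↦ derivationGraph d (μ (f s))) :=
  congrArg (m.factorial • ·) <| Eq.symm <|
    whitneyMap_vecCons (μ r) (d (μ r)) fun s ↦ derivationGraph d (μ (f s))

theorem whitneyForm_apply_eq_zero (t : Fin m) : whitneyForm d μ f (f t) = 0 := by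
  rw [whitneyForm_eq_whitneyMap,
    (whitneyMap A M m).map_eq_zero_of_eq _ (i := 0) (j := t.succ) rfl (Fin.succ_ne_zero t).symm,
    smul_zero]

theorem sum_whitneyForm (hμ : ∑ i, μ i = 1) :
    ∑ r, whitneyForm d μ f r =
      m.factorial • (List.ofFn fun s ↦ ExteriorAlgebra.ι A (d (μ (f s)))).prod := by
  let v : Fin m → A × M := fun s ↦ derivationGraph d (μ (f s))
  have sum_graph : ∑ r, derivationGraph d (μ r) = (1, 0) := by
    rw [← map_sum, hμ, derivationGraph_one]
  calc ∑ r, whitneyForm d μ f r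
      = m.factorial • ∑ r, whitneyMap A M m (Matrix.vecCons (derivationGraph d (μ r)) v) := by
        simp only [whitneyForm_eq_whitneyMap, Finset.smul_sum, v]
    _ = m.factorial • whitneyMap A M m (Matrix.vecCons (1, 0) v) := by
        rw [← alternatingMap_vecCons_sum, sum_graph]
    _ = m.factorial • (List.ofFn fun s ↦ ExteriorAlgebra.ι A (d (μ (f s)))).prod := by
        simp only [whitneyMap_vecCons, map_zero, zero_mul, smul_zero, Finset.sum_const_zero,
          one_smul, add_zero]
        rfl

theorem stmt14_general (hμ : ∑ i, μ i = 1) (r₀ : Fin (n + 1)) :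
    whitneyForm d μ f r₀ =
      m.factorial • (List.ofFn fun s ↦ ExteriorAlgebra.ι A (d (μ (f s)))).prod -
        ∑ r with r ≠ r₀ ∧ ∀ s, f s ≠ r, whitneyForm d μ f r := by
  have sum_off_face : ∑ r with r ≠ r₀ ∧ ∀ s, f s ≠ r, whitneyForm d μ f r =
      ∑ r with r ≠ r₀, whitneyForm d μ f r := by
    refine Finset.sum_subset (fun r ↦ by simp +contextual) fun r hr hr_face ↦ ?_
    obtain ⟨s, rfl⟩ : ∃ s, f s = r := by simp_all
    exact whitneyForm_apply_eq_zero d μ f s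
  rw [sum_off_face, Finset.filter_ne', ← sum_whitneyForm d μ f hμ, eq_sub_iff_add_eq,
    Finset.add_sum_erase _ _ (Finset.mem_univ r₀)]

end WhitneyForm

/-- Whitney's lemma, algebraically: if `μ_0 + μ_1 + ⋯ + μ_n = 1` and
`I = {f 0 < ⋯ < f (m-1)} ⊆ {1, …, n}`, then
`W(0, I) = m! dμ_{i_1} ∧ ⋯ ∧ dμ_{i_m} − Σ_{r ∈ {1,…,n} \ I} W(r, I)`. -/
theorem stmt14 {R A M : Type*} [CommRing R] [CommRing A] [Algebra R A]
    [AddCommGroup M] [Module R M] [Module A M] [IsScalarTower R A M]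
    (d : Derivation R A M) (n m : ℕ) (hn : 1 ≤ n)
    (μ : Fin (n + 1) → A) (hμ : ∑ i : Fin (n + 1), μ i = 1)
    (f : Fin m → Fin (n + 1)) (hf : StrictMono f) (hf0 : ∀ s : Fin m, f s ≠ 0) :
    whitneyForm d μ f 0 =
      (Nat.factorial m) •
          (List.ofFn fun s : Fin m => ExteriorAlgebra.ι A (d (μ (f s)))).prod -
        ∑ r ∈ Finset.univ.filter
            (fun r : Fin (n + 1) => r ≠ 0 ∧ ∀ s : Fin m, f s ≠ r),
          whitneyForm d μ f r :=
  stmt14_general d μ f hμ 0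
end
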